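/- The Galois group of x^5 + 20x + 32 over ℚ has order 10 (it is the dihedral group D_5). -/

import Mathlib

open Polynomial

/-!
Write `f = X ^ 5 + 20 * X + 32` and let `K` be a splitting field of `f`. The substitution
`X ↦ X - 2` makes `f` Eisenstein at `5`, so `ℚ(a)` has degree `5` for every root `a`.
Over `ℚ(a)` the quotient `f / (X - a)` is a product of two quadratics. Placing the roots on a
pentagon, one quadratic has the two neighbours of `a` as its roots and the other the two vertices
opposite to `a`. The sum `s(a)` of the neighbours of `a` is a polynomial in `a`, so from `a` and a
neighbour `b` one can walk around the pentagon (`s(a) - b`, `s(b) - a`, …); hence `K = ℚ(a, b)` has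
degree at most `2` over `ℚ(a)`. Since `f` has exactly one real root, it does not split in `ℚ(a)`,
which embeds into `ℝ`, and `ℚ(a)` is not normal over `ℚ`. So `K ≠ ℚ(a)`, the degree is `10`, and the
Galois group is not commutative; a noncommutative group of order `2 p` with `p` prime is dihedral.
-/

section Dihedral

variable {G : Type*} [Group G]

/-- The homomorphism out of `DihedralGroup n` given by its semidirect product structure: a
homomorphism `φ` on the rotations, indexed by `ZMod n`, and an involution `s` inverting its values,
the image of the reflection `sr 0`. -/
def dihedralLift {n : ℕ} (φ : Multiplicative (ZMod n) →* G) (s : G) (hs : s ^ 2 = 1)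
    (hφ : ∀ i, s * φ i * s⁻¹ = (φ i)⁻¹) : DihedralGroup n →* G :=
  MonoidHom.mk'
    (fun
      | .r i => φ (.ofAdd i)
      | .sr i => s * φ (.ofAdd i))
    (by
      have φ_mul_s (i) : φ i * s = s * (φ i)⁻¹ := by
        rw [← hφ, ← mul_assoc, ← mul_assoc, ← sq, hs, one_mul,
          inv_eq_of_mul_eq_one_left (sq s ▸ hs)]
      rintro (i | i) (j | j)
      · simp [ofAdd_add]
      · simp [← mul_assoc, φ_mul_s, ofAdd_sub, div_eq_inv_mul]
      · simp [ofAdd_add, mul_assoc]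
      · simp [mul_assoc, ofAdd_sub, div_eq_inv_mul, ← mul_assoc (φ _) s, φ_mul_s,
          ← mul_assoc s s, ← sq, hs])

theorem dihedralLift_injective {n : ℕ} {φ : Multiplicative (ZMod n) →* G} {s : G} (hs : s ^ 2 = 1)
    (hφ : ∀ i, s * φ i * s⁻¹ = (φ i)⁻¹) (hinj : Function.Injective φ) (hmem : s ∉ φ.range) :
    Function.Injective (dihedralLift φ s hs hφ) := by
  rw [injective_iff_map_eq_one]
  rintro (i | i) hi
  · have hi : φ (.ofAdd i) = 1 := hi
    rw [map_eq_one_iff φ hinj, ofAdd_eq_one] at hi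
    rw [hi, DihedralGroup.r_zero]
  · have hi : s * φ (.ofAdd i) = 1 := hi
    exact absurd (eq_inv_of_mul_eq_one_left hi ▸ inv_mem ⟨_, rfl⟩) hmem

theorem conj_eq_inv_of_not_commute {p : ℕ} [Fact p.Prime] {r s : G} (hr : orderOf r = p)
    [hnormal : (Subgroup.zpowers r).Normal] (hs : s ^ 2 = 1) (hrs : ¬ Commute s r) :
    s * r * s⁻¹ = r⁻¹ := by
  obtain ⟨k, hk : r ^ k = s * r * s⁻¹⟩ := hnormal.conj_mem r (Subgroup.mem_zpowers r) s
  have hkk : r ^ (k * k) = r ^ (1 : ℤ) := calc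
    r ^ (k * k) = s * r ^ k * s⁻¹ := by rw [zpow_mul, hk, conj_zpow, hk]
    _ = s ^ 2 * r * (s ^ 2)⁻¹ := by rw [hk]; simp only [sq, mul_inv_rev, mul_assoc]
    _ = r ^ (1 : ℤ) := by simp [hs]
  have hdvd : (p : ℤ) ∣ (k - 1) * (k + 1) := by
    rw [zpow_eq_zpow_iff_modEq, hr, Int.modEq_comm, Int.modEq_iff_dvd] at hkk
    convert hkk using 1
    ring
  rcases (Nat.prime_iff_prime_int.mp Fact.out).dvd_or_dvd hdvd with h | h
  · have hk1 : r ^ k = r ^ (1 : ℤ) := by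
      rwa [zpow_eq_zpow_iff_modEq, hr, Int.modEq_comm, Int.modEq_iff_dvd]
    exact absurd (mul_inv_eq_iff_eq_mul.mp (hk.symm.trans (hk1.trans (zpow_one r)))) hrs
  · rw [← hk, ← zpow_neg_one, zpow_eq_zpow_iff_modEq, hr, Int.modEq_comm, Int.modEq_iff_dvd]
    simpa using h

theorem isMulCommutative_of_commute_of_coprime_of_card_eq [Finite G] {r s : G} (hrs : Commute s r)
    (hcoprime : (orderOf s).Coprime (orderOf r)) (hcard : Nat.card G = orderOf s * orderOf r) :
    IsMulCommutative G :=
  have := isCyclic_of_orderOf_eq_card (s * r) <| by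
    rw [hrs.orderOf_mul_eq_mul_orderOf_of_coprime hcoprime, hcard]
  IsCyclic.isMulCommutative

theorem nonempty_mulEquiv_dihedralGroup_of_card_eq_two_mul_prime {p : ℕ} [hp : Fact p.Prime]
    (hcard : Nat.card G = 2 * p) (hcomm : ¬ IsMulCommutative G) :
    Nonempty (G ≃* DihedralGroup p) := by
  have : Finite G := Nat.finite_of_card_ne_zero (by simp [hcard, hp.out.ne_zero])
  have hp2 : p ≠ 2 := by
    rintro rfl
    exact hcomm (IsPGroup.isMulCommutative_of_card_eq_prime_sq (hcard.trans (sq 2).symm))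
  have hcoprime : Nat.Coprime 2 p := (Nat.coprime_primes Nat.prime_two hp.out).mpr hp2.symm
  obtain ⟨r, hr⟩ := exists_prime_orderOf_dvd_card' (G := G) p (hcard ▸ dvd_mul_left p 2)
  obtain ⟨s, hs⟩ := exists_prime_orderOf_dvd_card' (G := G) 2 (hcard ▸ dvd_mul_right 2 p)
  have hs2 : s ^ 2 = 1 := hs ▸ pow_orderOf_eq_one s
  have hrs : ¬ Commute s r := fun h ↦ hcomm <|
    isMulCommutative_of_commute_of_coprime_of_card_eq h (by rwa [hs, hr]) (by rw [hs, hr, hcard])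
  have hHcard : Nat.card (Subgroup.zpowers r) = p := (Nat.card_zpowers r).trans hr
  have : (Subgroup.zpowers r).Normal := Subgroup.normal_of_index_eq_two <|
    Nat.eq_of_mul_eq_mul_right hp.out.pos <| by
      rw [← hcard, ← (Subgroup.zpowers r).index_mul_card, hHcard]
  have hinv : ∀ x ∈ Subgroup.zpowers r, s * x * s⁻¹ = x⁻¹ := by
    rintro _ ⟨k, rfl⟩
    simp only [← conj_zpow, conj_eq_inv_of_not_commute hr hs2 hrs, inv_zpow]
  have hsr : s ∉ Subgroup.zpowers r := fun ⟨k, hk⟩ ↦ hrs (hk ▸ (Commute.refl r).zpow_left k)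
  have hgen : ∀ x : Subgroup.zpowers r, x ∈ Subgroup.zpowers ⟨r, Subgroup.mem_zpowers r⟩ := by
    rintro ⟨_, k, rfl⟩
    exact ⟨k, Subtype.ext rfl⟩
  let e := zmodMulEquivOfGenerator hgen hHcard
  let ψ := dihedralLift ((Subgroup.zpowers r).subtype.comp e.toMonoidHom) s hs2
    fun i ↦ hinv _ (e i).2
  have hψ : Function.Injective ψ := dihedralLift_injective _ _
    (Subtype.val_injective.comp e.injective) fun ⟨i, hi⟩ ↦ hsr (hi ▸ (e i).2)
  exact ⟨(MulEquiv.ofBijective ψ <| (Nat.bijective_iff_injective_and_card ψ).mpr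
    ⟨hψ, by rw [hcard, DihedralGroup.nat_card]⟩).symm⟩

end Dihedral

section Galois

open Module IntermediateField

variable {F K : Type*} [Field F] [Field K] [Algebra F K]

theorem finrank_le_natDegree_of_adjoin_simple_eq_top {b : K} (hb : F⟮b⟯ = ⊤) {q : F[X]}
    (hq : q ≠ 0) (hroot : aeval b q = 0) : finrank F K ≤ q.natDegree := by
  have hint : IsIntegral F b := isAlgebraic_iff_isIntegral.mp ⟨q, hq, hroot⟩
  rw [← finrank_top', ← hb, adjoin.finrank hint]
  exact natDegree_le_of_dvd (minpoly.dvd F b hroot) hq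

theorem finrank_adjoin_simple_of_irreducible {f : F[X]} (hf : Irreducible f) {a : K}
    (ha : aeval a f = 0) : finrank F F⟮a⟯ = f.natDegree := by
  rw [adjoin.finrank (isAlgebraic_iff_isIntegral.mp ⟨f, hf.ne_zero, ha⟩),
    ← minpoly.eq_of_irreducible hf ha, natDegree_mul_C]
  simpa using hf.ne_zero

theorem not_normal_adjoin_simple_of_existsUnique_root {f : F[X]} (hf : Irreducible f)
    (hsep : f.Separable) (hdeg : f.natDegree ≠ 1) {a : K} (ha : aeval a f = 0)
    {E : Type*} [Field E] [Algebra F E] (hE : ∃! x : E, aeval x f = 0) : ¬ Normal F F⟮a⟯ := by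
  intro hnormal
  obtain ⟨x, hx, hunique⟩ := hE
  have hint : IsIntegral F a := isAlgebraic_iff_isIntegral.mp ⟨f, hf.ne_zero, ha⟩
  have hassoc : Associated (minpoly F a) f :=
    (minpoly.irreducible hint).associated_of_dvd hf (minpoly.dvd F a ha)
  have hsplits : (f.map (algebraMap F F⟮a⟯)).Splits := by
    refine (hnormal.splits (AdjoinSimple.gen F a)).of_dvd ?_ ?_
    · exact Polynomial.map_ne_zero (minpoly.ne_zero (hnormal.isIntegral _))
    · rw [minpoly_gen]
      exact Polynomial.map_dvd _ hassoc.symm.dvd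
  have embedding : F⟮a⟯ →ₐ[F] E := (algHomAdjoinIntegralEquiv F hint).symm
    ⟨x, mem_aroots.mpr
      ⟨minpoly.ne_zero hint, aeval_eq_zero_of_dvd_aeval_eq_zero hassoc.symm.dvd hx⟩⟩
  have hroots : Subsingleton (f.rootSet E) := ⟨fun y z ↦ Subtype.ext <|
    (hunique y (aeval_eq_zero_of_mem_rootSet y.2)).trans
      (hunique z (aeval_eq_zero_of_mem_rootSet z.2)).symm⟩
  have hle : f.natDegree ≤ 1 := by
    rw [← card_rootSet_eq_natDegree hsep (hsplits.of_algHom embedding)]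
    exact Fintype.card_le_one_iff_subsingleton.mpr hroots
  exact hdeg (le_antisymm hle hf.natDegree_pos)

theorem finrank_eq_two_of_not_normal [FiniteDimensional F K] [Normal F K]
    {L : IntermediateField F K} (hL : ¬ Normal F L) (hle : finrank L K ≤ 2) : finrank L K = 2 := by
  have hne : finrank L K ≠ 1 := by
    intro h
    rw [finrank_eq_one_iff_eq_top] at h
    exact hL (h ▸ .of_algEquiv topEquiv.symm)
  have : 0 < finrank L K := finrank_pos
  omega

theorem nonempty_gal_mulEquiv_dihedralGroup [FiniteDimensional F K] [IsGalois F K]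
    {L : IntermediateField F K} (hL : ¬ Normal F L) {p : ℕ} [Fact p.Prime]
    (hFL : finrank F L = p) (hLK : finrank L K = 2) :
    Nonempty (Gal(K/F) ≃* DihedralGroup p) := by
  refine nonempty_mulEquiv_dihedralGroup_of_card_eq_two_mul_prime ?_ fun hcomm ↦ ?_
  · rw [IsGalois.card_aut_eq_finrank, ← finrank_mul_finrank F L K, hFL, hLK, mul_comm]
  · have : IsAbelianGalois F K := { }
    exact hL inferInstance

end Galois

theorem irreducible_map_of_isEisensteinAt_taylor {R K : Type*} [CommRing R] [IsDomain R]
    [IsIntegrallyClosed R] [Field K] [Algebra R K] [IsFractionRing R K] {f : R[X]} (hf : f.Monic)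
    (hdeg : 0 < f.natDegree) {P : Ideal R} (hP : P.IsPrime) {c : R}
    (heis : (taylor c f).IsEisensteinAt P) : Irreducible (f.map (algebraMap R K)) := by
  rw [← hf.irreducible_iff_irreducible_map_fraction_map,
    ← MulEquiv.irreducible_iff (taylorEquiv c)]
  refine heis.irreducible hP ?_ ?_
  · exact (hf.comp_X_add_C c).isPrimitive
  · rwa [natDegree_taylor]

section Quintic

/-- The polynomial `X ^ 5 + 20 * X + 32`, over any commutative ring so that it can be factored over
extensions of `ℚ` and reduced to Eisenstein's criterion over `ℤ`. -/
noncomputable def quintic (R : Type*) [CommRing R] : R[X] := X ^ 5 + 20 * X + 32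

theorem map_quintic {R S : Type*} [CommRing R] [CommRing S] (φ : R →+* S) :
    (quintic R).map φ = quintic S := by
  simp [quintic]

theorem isRoot_quintic_iff {R : Type*} [CommRing R] {x : R} :
    (quintic R).IsRoot x ↔ x ^ 5 + 20 * x + 32 = 0 := by
  simp [quintic]

theorem aeval_quintic_eq_zero_iff {R A : Type*} [CommRing R] [CommRing A] [Algebra R A] {x : A} :
    aeval x (quintic R) = 0 ↔ (quintic A).IsRoot x := by
  rw [aeval_def, ← eval_map, map_quintic, IsRoot.def]

theorem monic_quintic (R : Type*) [CommRing R] : (quintic R).Monic := by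
  unfold quintic
  monicity!

theorem natDegree_quintic (R : Type*) [CommRing R] [Nontrivial R] : (quintic R).natDegree = 5 := by
  unfold quintic
  compute_degree!

theorem taylor_quintic (R : Type*) [CommRing R] : taylor (-2) (quintic R) =
    X ^ 5 + C (-10) * X ^ 4 + C 40 * X ^ 3 + C (-80) * X ^ 2 + C 100 * X + C (-40) := by
  simp only [quintic, taylor_apply, add_comp, mul_comp, pow_comp, X_comp, ofNat_comp, map_neg,
    map_ofNat]
  ring

theorem isEisensteinAt_taylor_quintic :
    (taylor (-2) (quintic ℤ)).IsEisensteinAt (Ideal.span {5}) where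
  leading := by
    rw [leadingCoeff_taylor, monic_quintic, Ideal.mem_span_singleton]
    norm_num
  mem {n} hn := by
    rw [natDegree_taylor, natDegree_quintic] at hn
    simp only [taylor_quintic, Ideal.mem_span_singleton, coeff_add, coeff_C_mul, coeff_X_pow,
      coeff_X, coeff_C]
    interval_cases n <;> norm_num
  notMem := by
    simp only [taylor_quintic, Ideal.span_singleton_pow, Ideal.mem_span_singleton, coeff_add,
      coeff_C_mul, coeff_X_pow, coeff_X, coeff_C]
    norm_num

theorem irreducible_quintic : Irreducible (quintic ℚ) := by
  rw [← map_quintic (algebraMap ℤ ℚ)]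
  refine irreducible_map_of_isEisensteinAt_taylor (monic_quintic ℤ) ?_ ?_
    isEisensteinAt_taylor_quintic
  · simp [natDegree_quintic]
  · rw [Ideal.span_singleton_prime (by norm_num), ← Nat.cast_ofNat, ← Nat.prime_iff_prime_int]
    norm_num

theorem existsUnique_real_isRoot_quintic : ∃! x : ℝ, (quintic ℝ).IsRoot x := by
  have hmono : StrictMono fun x : ℝ ↦ x ^ 5 + 20 * x + 32 :=
    ((Odd.strictMono_pow (by decide)).add (strictMono_mul_left_of_pos (by norm_num))).add_const 32
  obtain ⟨x, -, hx⟩ : (0 : ℝ) ∈ (fun x : ℝ ↦ x ^ 5 + 20 * x + 32) '' Set.Icc (-2) 0 :=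
    intermediate_value_Icc (by norm_num) (by fun_prop) (by norm_num)
  simp only [isRoot_quintic_iff]
  exact ⟨x, hx, fun y hy ↦ hmono.injective (hy.trans hx.symm)⟩

section Pentagon

variable {K : Type*} [Field K]

/-- The sum of the two neighbours of the root `a` on the pentagon formed by the roots of the
quintic. The formulas here and in the two quadratics below are read off from the factorization of
`X ^ 5 + 20 * X + 32` over `ℚ(a)`. -/
def neighborSum (a : K) : K := -(2 + a / 2 + a ^ 2 / 4 + a ^ 4 / 8)

/-- The monic quadratic whose roots are the neighbours of the root `a` on the pentagon formed by the
roots of the quintic. -/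
noncomputable def neighborPoly (a : K) : K[X] :=
  X ^ 2 - C (neighborSum a) * X + C (2 - a / 2 - a ^ 3 / 4 + a ^ 4 / 4)

/-- The monic quadratic whose roots are the two roots of the quintic that are neither `a` nor a
neighbour of `a`. All five roots sum to zero, so these two sum to `-(a + neighborSum a)`. -/
noncomputable def oppositePoly (a : K) : K[X] :=
  X ^ 2 + C (a + neighborSum a) * X + C (2 - 3 * a / 2 + a ^ 2 / 2 - a ^ 3 / 4)

theorem natDegree_neighborPoly (a : K) : (neighborPoly a).natDegree = 2 := by
  unfold neighborPoly
  compute_degree!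

theorem map_neighborSum {L : Type*} [Field L] (φ : K →+* L) (a : K) :
    φ (neighborSum a) = neighborSum (φ a) := by
  simp [neighborSum, map_ofNat]

theorem neighborSum_mem {F : Type*} [Field F] [Algebra F K] {L : IntermediateField F K} {a : K}
    (ha : a ∈ L) : neighborSum a ∈ L :=
  map_neighborSum (algebraMap L K) ⟨a, ha⟩ ▸ (neighborSum (⟨a, ha⟩ : L)).2

theorem map_neighborPoly {L : Type*} [Field L] (φ : K →+* L) (a : K) :
    (neighborPoly a).map φ = neighborPoly (φ a) := by
  simp [neighborPoly, map_neighborSum, map_ofNat]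

variable [CharZero K] {a b : K}

theorem quintic_eq_mul (ha : (quintic K).IsRoot a) :
    quintic K = (X - C a) * neighborPoly a * oppositePoly a := by
  rw [isRoot_quintic_iff] at ha
  refine Polynomial.funext fun x ↦ ?_
  simp only [quintic, neighborPoly, oppositePoly, neighborSum, eval_add, eval_sub, eval_mul,
    eval_pow, eval_X, eval_C, eval_ofNat]
  grind

theorem isRoot_oppositePoly_neighborSum_sub (ha : (quintic K).IsRoot a)
    (hb : (neighborPoly a).IsRoot b) : (oppositePoly a).IsRoot (neighborSum b - a) := by
  rw [isRoot_quintic_iff] at ha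
  simp only [neighborPoly, oppositePoly, neighborSum, IsRoot.def, eval_add, eval_sub, eval_mul,
    eval_pow, eval_X, eval_C] at hb ⊢
  grind

theorem exists_isRoot_neighborPoly (hsplits : (quintic K).Splits) (ha : (quintic K).IsRoot a) :
    ∃ b, (neighborPoly a).IsRoot b := by
  have hdvd : neighborPoly a ∣ quintic K :=
    quintic_eq_mul ha ▸ (dvd_mul_left _ _).mul_right _
  refine (hsplits.of_dvd (monic_quintic K).ne_zero hdvd).exists_eval_eq_zero fun h ↦ ?_
  simpa [natDegree_neighborPoly] using natDegree_eq_of_degree_eq_some h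

theorem eq_or_of_isRoot_quintic (ha : (quintic K).IsRoot a) (hb : (neighborPoly a).IsRoot b)
    {x : K} (hx : (quintic K).IsRoot x) :
    x = a ∨ x = b ∨ x = neighborSum a - b ∨ x = neighborSum b - a ∨
      x = -(a + neighborSum a) - (neighborSum b - a) := by
  have hc := isRoot_oppositePoly_neighborSum_sub ha hb
  simp only [quintic_eq_mul ha, root_mul, root_X_sub_C] at hx
  simp only [neighborPoly, oppositePoly, IsRoot.def, eval_add, eval_sub, eval_mul, eval_pow, eval_X,
    eval_C] at hb hc hx
  rcases hx with (hx | hx) | hx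
  · exact .inl hx.symm
  · have : (x - b) * (x - (neighborSum a - b)) = 0 := by linear_combination hx - hb
    simp only [mul_eq_zero, sub_eq_zero] at this
    tauto
  · have : (x - (neighborSum b - a)) * (x - (-(a + neighborSum a) - (neighborSum b - a))) = 0 := by
      linear_combination hx - hc
    simp only [mul_eq_zero, sub_eq_zero] at this
    tauto

theorem adjoin_root_neighbor_eq_top {F : Type*} [Field F] [Algebra F K]
    [hK : IsSplittingField F K (quintic F)] (ha : (quintic K).IsRoot a)
    (hb : (neighborPoly a).IsRoot b) : IntermediateField.adjoin F {a, b} = ⊤ := by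
  rw [eq_top_iff, ← (isSplittingField_iff_intermediateField.mp hK).2,
    IntermediateField.adjoin_le_iff]
  intro x hx
  have haM : a ∈ IntermediateField.adjoin F {a, b} := IntermediateField.subset_adjoin _ _ (by simp)
  have hbM : b ∈ IntermediateField.adjoin F {a, b} := IntermediateField.subset_adjoin _ _ (by simp)
  have hc := sub_mem (neighborSum_mem hbM) haM
  have hroot := aeval_quintic_eq_zero_iff.mp (aeval_eq_zero_of_mem_rootSet hx)
  rcases eq_or_of_isRoot_quintic ha hb hroot with rfl | rfl | rfl | rfl | rfl
  · exact haM
  · exact hbM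
  · exact sub_mem (neighborSum_mem haM) hbM
  · exact hc
  · exact sub_mem (neg_mem (add_mem haM (neighborSum_mem haM))) hc

end Pentagon

section SplittingField

open Module IntermediateField

variable {F K : Type*} [Field F] [Field K] [Algebra F K]

theorem not_normal_adjoin_root_quintic [Algebra F ℝ] (hirr : Irreducible (quintic F)) {a : K}
    (ha : aeval a (quintic F) = 0) : ¬ Normal F F⟮a⟯ := by
  have : CharZero F := (algebraMap F ℝ).charZero
  refine not_normal_adjoin_simple_of_existsUnique_root (E := ℝ) hirr hirr.separable
    (by simp [natDegree_quintic]) ha ?_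
  simpa only [aeval_quintic_eq_zero_iff] using existsUnique_real_isRoot_quintic

theorem finrank_adjoin_root_quintic_le_two [CharZero F] [IsSplittingField F K (quintic F)] {a : K}
    (ha : aeval a (quintic F) = 0) : finrank F⟮a⟯ K ≤ 2 := by
  have : CharZero K := charZero_of_injective_algebraMap (algebraMap F K).injective
  have hroot := aeval_quintic_eq_zero_iff.mp ha
  have hsplits : (quintic K).Splits :=
    map_quintic (algebraMap F K) ▸ IsSplittingField.splits K (quintic F)
  obtain ⟨b, hb⟩ := exists_isRoot_neighborPoly hsplits hroot
  have htop : F⟮a⟯⟮b⟯ = ⊤ := by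
    rw [← restrictScalars_eq_top_iff (K := F), adjoin_simple_adjoin_simple,
      adjoin_root_neighbor_eq_top hroot hb]
  rw [← natDegree_neighborPoly (AdjoinSimple.gen F a)]
  refine finrank_le_natDegree_of_adjoin_simple_eq_top htop ?_ ?_
  · exact ne_zero_of_natDegree_gt (n := 1) (by simp [natDegree_neighborPoly])
  · rwa [aeval_def, ← eval_map, map_neighborPoly, AdjoinSimple.algebraMap_gen]

theorem stmt_16_general [Algebra F ℝ] [IsSplittingField F K (quintic F)]
    (hirr : Irreducible (quintic F)) :
    finrank F K = 10 ∧ Nonempty (Gal(K/F) ≃* DihedralGroup 5) := by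
  have : CharZero F := (algebraMap F ℝ).charZero
  have : FiniteDimensional F K := IsSplittingField.finiteDimensional K (quintic F)
  have : IsGalois F K := .of_separable_splitting_field hirr.separable
  have : Fact (Nat.Prime 5) := ⟨Nat.prime_five⟩
  obtain ⟨a, ha⟩ : ∃ a : K, aeval a (quintic F) = 0 := by
    simpa only [eval_map_algebraMap] using
      (IsSplittingField.splits K (quintic F)).exists_eval_eq_zero <|
        degree_ne_of_natDegree_ne (by simp [natDegree_quintic])
  have hnormal := not_normal_adjoin_root_quintic hirr ha
  have h5 : finrank F F⟮a⟯ = 5 := by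
    rw [finrank_adjoin_simple_of_irreducible hirr ha, natDegree_quintic]
  have h2 : finrank F⟮a⟯ K = 2 :=
    finrank_eq_two_of_not_normal hnormal (finrank_adjoin_root_quintic_le_two ha)
  exact ⟨by rw [← finrank_mul_finrank F F⟮a⟯ K, h5, h2],
    nonempty_gal_mulEquiv_dihedralGroup hnormal h5 h2⟩

end SplittingField
end Quintic

theorem stmt_16 :
    Module.finrank ℚ (X ^ 5 + 20 * X + 32 : Polynomial ℚ).SplittingField = 10 ∧
    Nonempty (((X ^ 5 + 20 * X + 32 : Polynomial ℚ).SplittingField ≃ₐ[ℚ]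
        (X ^ 5 + 20 * X + 32 : Polynomial ℚ).SplittingField) ≃* DihedralGroup 5) := by
  -- The statement elaborates with the `ℚ`-algebra structure that every division ring of
  -- characteristic zero has, not with the one from the construction of the splitting field.
  have : IsSplittingField ℚ (X ^ 5 + 20 * X + 32 : ℚ[X]).SplittingField (quintic ℚ) := by
    rw [quintic]
    convert IsSplittingField.splittingField (X ^ 5 + 20 * X + 32 : ℚ[X])
    exact Subsingleton.elim _ _
  exact stmt_16_general irreducible_quintic
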